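/- Let n and k be integers with k ≥ 1 and n ≥ 2(k+1). Then ds_n maps the kernel of ds_n^{(k+1)} onto the kernel of ds_{n−2}^{(k)}: one has ds_n(ker ds_n^{(k+1)}) = ker ds_{n−2}^{(k)}, where ker ds_m^{(j)} := { f ∈ J_m : ds_m^{(j)}(f) = 0 }. -/

import Mathlib

/-!
Common setup: `R n` is the ring of Laurent polynomials
`ℤ[x₁^{±1}, …, xₙ^{±1}]`, realized as the group algebra over `ℤ` of the
group `ℤ^n` of exponent vectors (`AddMonoidAlgebra ℤ (Fin n → ℤ)`).
-/

noncomputable section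

/-- The ring `Rₙ = ℤ[x₁^{±1}, …, xₙ^{±1}]` of Laurent polynomials in `n` variables. -/
abbrev R (n : ℕ) : Type := AddMonoidAlgebra ℤ (Fin n → ℤ)

/-- The variable `xᵢ` of `R n` (`i` is a `0`-based index). -/
def X {n : ℕ} (i : Fin n) : R n := AddMonoidAlgebra.single (Pi.single i (1 : ℤ)) 1

/-- The inverse `xᵢ⁻¹` of the variable `xᵢ` of `R n`. -/
def Xinv {n : ℕ} (i : Fin n) : R n := AddMonoidAlgebra.single (Pi.single i (-1 : ℤ)) 1

/-- The action of a permutation `w` on exponent vectors. -/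
def permExp {n : ℕ} (w : Equiv.Perm (Fin n)) : (Fin n → ℤ) →+ (Fin n → ℤ) :=
  AddMonoidHom.mk' (fun m => m ∘ w.symm) (fun _ _ => rfl)

/-- The action of `w ∈ Sₙ` on `R n`, permuting the variables (`xᵢ ↦ x_{w i}`). -/
def permHom {n : ℕ} (w : Equiv.Perm (Fin n)) : R n →+* R n :=
  AddMonoidAlgebra.mapDomainRingHom ℤ (permExp w)

/-- `f` is a symmetric Laurent polynomial, i.e. `f ∈ Rₙ^{Sₙ}`. -/
def SymmP {n : ℕ} (f : R n) : Prop := ∀ w : Equiv.Perm (Fin n), permHom w f = f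

/-- The map of exponent groups underlying the evaluation
`xᵢ ↦ xᵢ (1 ≤ i ≤ n-2), x_{n-1} ↦ t, xₙ ↦ t⁻¹`; the second coordinate of the
target records the exponent of `t`. -/
def evExp (n : ℕ) : (Fin n → ℤ) →+ ((Fin (n - 2) → ℤ) × ℤ) :=
  AddMonoidHom.mk'
    (fun m => (fun i => m (Fin.castLE (Nat.sub_le n 2) i),
      if h : 2 ≤ n then m ⟨n - 2, by omega⟩ - m ⟨n - 1, by omega⟩ else 0))
    (by
      intro a b
      refine Prod.ext (funext fun i => rfl) ?_
      by_cases h : 2 ≤ n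
      · simp [h]; ring
      · simp [h])

/-- The evaluation homomorphism
`evₙ : ℤ[x₁^{±1},…,xₙ^{±1}] → ℤ[x₁^{±1},…,x_{n-2}^{±1}, t^{±1}]` determined by
`xᵢ ↦ xᵢ` for `1 ≤ i ≤ n-2`, `x_{n-1} ↦ t`, `xₙ ↦ t⁻¹`.  The target is realized
as the group algebra of `ℤ^{n-2} × ℤ`, the last factor recording the exponent
of `t`. -/
def ev (n : ℕ) : R n →+* AddMonoidAlgebra ℤ ((Fin (n - 2) → ℤ) × ℤ) :=
  AddMonoidAlgebra.mapDomainRingHom ℤ (evExp n)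

/-- An element of `ℤ[x₁^{±1},…,x_{n-2}^{±1}, t^{±1}]` "does not involve `t`",
i.e. it lies in the image of the subring `ℤ[x₁^{±1},…,x_{n-2}^{±1}]`. -/
def NoT (n : ℕ) (g : AddMonoidAlgebra ℤ ((Fin (n - 2) → ℤ) × ℤ)) : Prop :=
  g ∈ Set.range
    (AddMonoidAlgebra.mapDomainRingHom ℤ (AddMonoidHom.inl (Fin (n - 2) → ℤ) ℤ))

/-- `J n`: for `n ≥ 2`, the set of symmetric Laurent polynomials `f` such that
`evₙ f` does not involve `t`; for `n = 0, 1` it is all of `Rₙ^{Sₙ}`. -/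
def J (n : ℕ) : Set (R n) := {f | SymmP f ∧ (2 ≤ n → NoT n (ev n f))}

/-- Restriction of exponent vectors to the first `n - 2` coordinates. -/
def resExp (n : ℕ) : (Fin n → ℤ) →+ (Fin (n - 2) → ℤ) :=
  AddMonoidHom.mk' (fun m i => m (Fin.castLE (Nat.sub_le n 2) i)) (fun _ _ => rfl)

/-- The ring homomorphism `R n → R (n-2)` which, on `J n`, is the
Duflo–Serganova map `dsₙ`: for `f ∈ J n` it is exactly `evₙ f` regarded as an
element of `ℤ[x₁^{±1},…,x_{n-2}^{±1}]` (the `t`-degree-`0` part of `evₙ f`). -/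
def ds (n : ℕ) : R n →+* R (n - 2) :=
  AddMonoidAlgebra.mapDomainRingHom ℤ (resExp n)

/-- The product `∏_{1 ≤ i < j ≤ n} (1 - xᵢ xⱼ)`. -/
def P (n : ℕ) : R n :=
  ∏ p ∈ Finset.univ.filter (fun p : Fin n × Fin n => p.1 < p.2), (1 - X p.1 * X p.2)

/-- The iterated Duflo–Serganova map
`dsₙ^{(k)} = ds_{n-2k+2} ∘ ⋯ ∘ ds_{n-2} ∘ dsₙ : Rₙ → R_{n-2k}`, with
`dsₙ^{(0)}` the identity. -/
def dsIter (n : ℕ) : (k : ℕ) → R n →+* R (n - 2 * k)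
  | 0 => RingHom.id (R n)
  | k + 1 => (ds (n - 2 * k)).comp (dsIter n k)

/-!
Let `g ∈ J m` with `ds g = 0`, and put

  `E n = ∑_I g(x_I) ∏_{i ∈ I, j ∉ I} (1 - xᵢ xⱼ) / (xᵢ - xⱼ)`,

the sum being over the subsets `I` of `{1, …, n}` with `m` elements. It is a Laurent polynomial: its
product with `∏_{i ≠ j} (xᵢ - xⱼ)` is symmetric and divisible by each prime `xᵢ - xⱼ`, `i < j`, and
by symmetry it is then divisible by `(xᵢ - xⱼ)²`. Clearly `E m = g`, and `ds (E (n + 2)) = E n`. To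
see the latter, substitute `t` and `t⁻¹` for the last two variables: if `I` contains both, then
`g(x_I) = 0`; if it contains just one, then the factor `1 - t t⁻¹` vanishes; if it contains neither,
then the additional factors `(1 - x t) (1 - x t⁻¹) / ((x - t) (x - t⁻¹))` equal `1`.

A given `f ∈ J n` with `dsₙ^{(k+1)} f = 0` is lifted to `J (n + 2)` by induction on `k`: the family
`E` through `g = dsₙ^{(k)} f` lifts `E n`, and `f - E n` is killed by `dsₙ^{(k)}`.
-/

section Evaluation

variable {n : ℕ} {S S' : Type*} [CommRing S] [CommRing S']

/-- The monomial with exponent `m`, as a unit of the group algebra. -/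
def monomialUnit {G : Type*} [AddGroup G] : Multiplicative G →* (AddMonoidAlgebra ℤ G)ˣ :=
  (AddMonoidAlgebra.of ℤ G).toHomUnits

/-- The variable `xᵢ` of `R n`, as a unit. -/
def unitX (i : Fin n) : (R n)ˣ := monomialUnit (.ofAdd (Pi.single i 1))

/-- The variable `xᵢ` of `ℤ[x₁^{±1}, …, xₙ^{±1}, t^{±1}]`, as a unit. -/
def genX (i : Fin n) : (AddMonoidAlgebra ℤ ((Fin n → ℤ) × ℤ))ˣ :=
  monomialUnit (.ofAdd (Pi.single i 1, 0))

/-- The variable `t` of `ℤ[x₁^{±1}, …, xₙ^{±1}, t^{±1}]`, as a unit. -/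
def genT (n : ℕ) : (AddMonoidAlgebra ℤ ((Fin n → ℤ) × ℤ))ˣ :=
  monomialUnit (.ofAdd (0, 1))

/-- Evaluation of Laurent polynomials at the point `u`, whose coordinates are units. -/
def evalHom (u : Fin n → Sˣ) : R n →+* S :=
  AddMonoidAlgebra.lift ℤ S (Fin n → ℤ)
    { toFun m := ↑(∏ i, u i ^ m.toAdd i)
      map_one' := by simp
      map_mul' := by simp [zpow_add, Finset.prod_mul_distrib] }

/-- Evaluation of elements of `ℤ[x₁^{±1}, …, xₙ^{±1}, t^{±1}]` at the point `(u, t)`. -/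
def evalHomT (u : Fin n → Sˣ) (t : Sˣ) : AddMonoidAlgebra ℤ ((Fin n → ℤ) × ℤ) →+* S :=
  AddMonoidAlgebra.lift ℤ S ((Fin n → ℤ) × ℤ)
    { toFun m := ↑((∏ i, u i ^ m.toAdd.1 i) * t ^ m.toAdd.2)
      map_one' := by simp
      map_mul' := by simp [zpow_add, Finset.prod_mul_distrib, mul_mul_mul_comm] }

/-- `ds (n + 2)`, with the index `n + 2 - 2` of its codomain written as `n`. -/
def dsAddTwo (n : ℕ) : R (n + 2) →+* R n := ds (n + 2)

/-- `ev (n + 2)`, with the index `n + 2 - 2` in its codomain written as `n`. -/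
def evAddTwo (n : ℕ) : R (n + 2) →+* AddMonoidAlgebra ℤ ((Fin n → ℤ) × ℤ) := ev (n + 2)

/-- The inclusion of `ℤ[x₁^{±1}, …, xₙ^{±1}]` into `ℤ[x₁^{±1}, …, xₙ^{±1}, t^{±1}]`. -/
def inclT (n : ℕ) : R n →+* AddMonoidAlgebra ℤ ((Fin n → ℤ) × ℤ) :=
  AddMonoidAlgebra.mapDomainRingHom ℤ (AddMonoidHom.inl (Fin n → ℤ) ℤ)

lemma coe_monomialUnit {G : Type*} [AddGroup G] (m : G) :
    (monomialUnit (.ofAdd m) : AddMonoidAlgebra ℤ G) = AddMonoidAlgebra.single m 1 :=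
  rfl

@[simp]
lemma coe_unitX (i : Fin n) : (unitX i : R n) = X i := rfl

lemma evalHom_single_one (u : Fin n → Sˣ) (m : Fin n → ℤ) :
    evalHom u (AddMonoidAlgebra.single m 1) = ↑(∏ i, u i ^ m i) :=
  (AddMonoidAlgebra.lift_single ..).trans (one_smul ..)

lemma evalHomT_single_one (u : Fin n → Sˣ) (t : Sˣ) (m : (Fin n → ℤ) × ℤ) :
    evalHomT u t (AddMonoidAlgebra.single m 1) = ↑((∏ i, u i ^ m.1 i) * t ^ m.2) :=
  (AddMonoidAlgebra.lift_single ..).trans (one_smul ..)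

lemma ringHom_ext_single {G A : Type*} [AddMonoid G] [Semiring A] {φ ψ : AddMonoidAlgebra ℤ G →+* A}
    (h : ∀ m, φ (AddMonoidAlgebra.single m 1) = ψ (AddMonoidAlgebra.single m 1)) : φ = ψ :=
  AddMonoidAlgebra.ringHom_ext
    (RingHom.congr_fun (RingHom.ext_int (φ.comp AddMonoidAlgebra.singleZeroRingHom)
      (ψ.comp AddMonoidAlgebra.singleZeroRingHom))) h

lemma prod_unitX_zpow (m : Fin n → ℤ) : ∏ i, unitX i ^ m i = monomialUnit (.ofAdd m) := by
  simp only [unitX, ← map_zpow, ← map_prod, ← ofAdd_zsmul, ← ofAdd_sum]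
  congr 2
  ext i
  simp [Finset.sum_apply, Pi.single_apply]

lemma prod_genX_zpow_mul (m : (Fin n → ℤ) × ℤ) :
    (∏ i, genX i ^ m.1 i) * genT n ^ m.2 = monomialUnit (.ofAdd m) := by
  simp only [genX, genT, ← map_zpow, ← map_prod, ← ofAdd_zsmul, ← ofAdd_sum, ← map_mul,
    ← ofAdd_add]
  congr 2
  ext i <;> simp [Finset.sum_apply, Pi.single_apply, Prod.fst_sum, Prod.snd_sum]

lemma map_evalHom (φ : S →+* S') (u : Fin n → Sˣ) (f : R n) :
    φ (evalHom u f) = evalHom (fun i => Units.map φ (u i)) f := by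
  suffices φ.comp (evalHom u) = evalHom (fun i => Units.map φ (u i)) from RingHom.congr_fun this f
  refine ringHom_ext_single fun m => ?_
  simp only [RingHom.comp_apply, evalHom_single_one, ← map_zpow, ← map_prod]
  rfl

lemma map_evalHom_congr (φ : S →+* S') {u v : Fin n → Sˣ} (huv : ∀ i, φ (u i) = φ (v i))
    (f : R n) : φ (evalHom u f) = φ (evalHom v f) := by
  rw [map_evalHom, map_evalHom]
  exact congrArg (evalHom · f) (funext fun i => Units.ext (huv i))

lemma evalHom_unitX (f : R n) : evalHom unitX f = f := by
  suffices evalHom (unitX (n := n)) = RingHom.id _ from RingHom.congr_fun this f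
  refine ringHom_ext_single fun m => ?_
  rw [evalHom_single_one, prod_unitX_zpow, coe_monomialUnit, RingHom.id_apply]

lemma evalHomT_gen (f : AddMonoidAlgebra ℤ ((Fin n → ℤ) × ℤ)) :
    evalHomT genX (genT n) f = f := by
  suffices evalHomT genX (genT n) = RingHom.id _ from RingHom.congr_fun this f
  refine ringHom_ext_single fun m => ?_
  rw [evalHomT_single_one, prod_genX_zpow_mul, coe_monomialUnit, RingHom.id_apply]

@[simp]
lemma evalHom_X (u : Fin n → Sˣ) (i : Fin n) : evalHom u (X i) = u i := by
  simp [X, evalHom_single_one, Pi.single_apply]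

lemma evalHom_permHom (u : Fin n → Sˣ) (w : Equiv.Perm (Fin n)) (f : R n) :
    evalHom u (permHom w f) = evalHom (u ∘ w) f := by
  suffices (evalHom u).comp (permHom w) = evalHom (u ∘ w) from RingHom.congr_fun this f
  refine ringHom_ext_single fun m => ?_
  rw [RingHom.comp_apply, permHom, AddMonoidAlgebra.mapDomainRingHom_apply,
    AddMonoidAlgebra.mapDomain_single, evalHom_single_one, evalHom_single_one,
    ← Equiv.prod_comp w]
  simp [permExp]

lemma evalHom_dsAddTwo (u : Fin n → Sˣ) (f : R (n + 2)) :
    evalHom u (dsAddTwo n f) = evalHom (Fin.append u ![1, 1]) f := by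
  suffices (evalHom u).comp (dsAddTwo n) = evalHom (Fin.append u ![1, 1]) from
    RingHom.congr_fun this f
  refine ringHom_ext_single fun m => ?_
  rw [RingHom.comp_apply, dsAddTwo, ds, AddMonoidAlgebra.mapDomainRingHom_apply,
    AddMonoidAlgebra.mapDomain_single, evalHom_single_one, evalHom_single_one, Fin.prod_univ_add]
  simp only [resExp, AddMonoidHom.mk'_apply, Fin.append_left, Fin.append_right, Fin.prod_univ_two,
    Matrix.cons_val_zero, Matrix.cons_val_one, one_zpow, mul_one]
  rfl

lemma evalHomT_evAddTwo (u : Fin n → Sˣ) (t : Sˣ) (f : R (n + 2)) :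
    evalHomT u t (evAddTwo n f) = evalHom (Fin.append u ![t, t⁻¹]) f := by
  suffices (evalHomT u t).comp (evAddTwo n) = evalHom (Fin.append u ![t, t⁻¹]) from
    RingHom.congr_fun this f
  refine ringHom_ext_single fun m => ?_
  rw [RingHom.comp_apply, evAddTwo, ev, AddMonoidAlgebra.mapDomainRingHom_apply,
    AddMonoidAlgebra.mapDomain_single, evalHom_single_one, evalHomT_single_one, Fin.prod_univ_add]
  simp only [evExp, le_add_iff_nonneg_left, zero_le, ↓reduceDIte, add_tsub_cancel_right,
    Nat.add_one_sub_one, AddMonoidHom.mk'_apply, Fin.append_left, Fin.append_right,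
    Fin.prod_univ_two, Matrix.cons_val_zero, Matrix.cons_val_one, zpow_sub, inv_zpow', zpow_neg]
  rfl

lemma evalHomT_inclT (u : Fin n → Sˣ) (t : Sˣ) (h : R n) :
    evalHomT u t (inclT n h) = evalHom u h := by
  suffices (evalHomT u t).comp (inclT n) = evalHom u from RingHom.congr_fun this h
  refine ringHom_ext_single fun m => ?_
  simp [inclT, evalHom_single_one, evalHomT_single_one]

end Evaluation

section Supersymmetry

variable {n : ℕ} {S : Type*} [CommRing S]

lemma SymmP.evalHom_comp {f : R n} (hf : SymmP f) (u : Fin n → Sˣ) (w : Equiv.Perm (Fin n)) :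
    evalHom (u ∘ w) f = evalHom u f := by
  rw [← evalHom_permHom, hf w]

lemma symmP_of_evalHom_unitX_comp {f : R n}
    (hf : ∀ w : Equiv.Perm (Fin n), evalHom (unitX ∘ w) f = f) : SymmP f := fun w => by
  rw [← evalHom_unitX (permHom w f), evalHom_permHom, hf w]

lemma SymmP.dsAddTwo {f : R (n + 2)} (hf : SymmP f) : SymmP (dsAddTwo n f) := by
  refine symmP_of_evalHom_unitX_comp fun w => ?_
  let w' : Equiv.Perm (Fin (n + 2)) :=
    finSumFinEquiv.permCongr (Equiv.sumCongr w (Equiv.refl (Fin 2)))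
  have hw' : Fin.append (unitX ∘ w) ![1, 1] = Fin.append (unitX (n := n)) ![1, 1] ∘ w' := by
    funext i
    induction i using Fin.addCases <;> simp [w']
  rw [evalHom_dsAddTwo, hw', hf.evalHom_comp, ← evalHom_dsAddTwo, evalHom_unitX]

section EvalNoT

variable {f : R (n + 2)} {h : R n} (hf : evAddTwo n f = inclT n h)
include hf

lemma evalHom_append_of_evAddTwo_eq (u : Fin n → Sˣ) (t : Sˣ) :
    evalHom (Fin.append u ![t, t⁻¹]) f = evalHom u h := by
  rw [← evalHomT_evAddTwo, hf, evalHomT_inclT]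

lemma dsAddTwo_eq_of_evAddTwo_eq : dsAddTwo n f = h := by
  rw [← evalHom_unitX (dsAddTwo n f), evalHom_dsAddTwo, ← evalHom_unitX h,
    ← evalHom_append_of_evAddTwo_eq hf unitX 1, inv_one]

end EvalNoT

lemma evalHom_append_of_mem_J {f : R (n + 2)} (hf : f ∈ J (n + 2)) (u : Fin n → Sˣ) (t : Sˣ) :
    evalHom (Fin.append u ![t, t⁻¹]) f = evalHom u (dsAddTwo n f) := by
  obtain ⟨h, hh⟩ := hf.2 (Nat.le_add_left 2 n)
  rw [evalHom_append_of_evAddTwo_eq hh.symm, dsAddTwo_eq_of_evAddTwo_eq hh.symm]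

lemma mem_J_and_dsAddTwo_eq {f : R (n + 2)} {h : R n} (hf : SymmP f)
    (heq : evalHom (Fin.append genX ![genT n, (genT n)⁻¹]) f = evalHom genX h) :
    f ∈ J (n + 2) ∧ dsAddTwo n f = h := by
  have hev : evAddTwo n f = inclT n h := by
    rw [← evalHomT_gen (inclT n h), evalHomT_inclT, ← heq, ← evalHomT_evAddTwo, evalHomT_gen]
  exact ⟨⟨hf, fun _ => ⟨h, hev.symm⟩⟩, dsAddTwo_eq_of_evAddTwo_eq hev⟩

lemma exists_perm_apply_natAdd {a b : Fin (n + 2)} (hab : a ≠ b) :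
    ∃ w : Equiv.Perm (Fin (n + 2)), w (Fin.natAdd n 0) = a ∧ w (Fin.natAdd n 1) = b :=
  MulAction.is_two_pretransitive_iff.mp (Equiv.Perm.isMultiplyPretransitive _ 2)
    (by simp [Fin.ext_iff]) hab

lemma evalHom_of_mem_J {f : R (n + 2)} (hf : f ∈ J (n + 2)) (u : Fin (n + 2) → Sˣ)
    (w : Equiv.Perm (Fin (n + 2))) (hu : u (w (Fin.natAdd n 0)) * u (w (Fin.natAdd n 1)) = 1) :
    evalHom u f = evalHom (fun i => u (w (Fin.castAdd 2 i))) (dsAddTwo n f) := by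
  rw [← hf.1.evalHom_comp u w, ← evalHom_append_of_mem_J hf _ (u (w (Fin.natAdd n 0))),
    ← eq_inv_of_mul_eq_one_right hu]
  congr 2
  funext i
  induction i using Fin.addCases with
  | left i => simp
  | right i => fin_cases i <;> simp

lemma evalHom_congr_of_mem_J {f : R (n + 2)} (hf : f ∈ J (n + 2)) {u v : Fin (n + 2) → Sˣ}
    {a b : Fin (n + 2)} (hab : a ≠ b) (huv : ∀ i, i ≠ a → i ≠ b → u i = v i)
    (hu : u a * u b = 1) (hv : v a * v b = 1) : evalHom u f = evalHom v f := by
  obtain ⟨w, rfl, rfl⟩ := exists_perm_apply_natAdd hab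
  rw [evalHom_of_mem_J hf u w hu, evalHom_of_mem_J hf v w hv]
  congr 2
  refine funext fun i => huv _ ?_ ?_ <;>
    simp only [ne_eq, w.apply_eq_iff_eq, Fin.ext_iff, Fin.val_castAdd, Fin.val_natAdd] <;>
    omega

lemma evalHom_eq_zero_of_dsAddTwo_eq_zero {f : R (n + 2)} (hf : f ∈ J (n + 2))
    (h0 : dsAddTwo n f = 0) {u : Fin (n + 2) → Sˣ} {a b : Fin (n + 2)} (hab : a ≠ b)
    (hu : u a * u b = 1) : evalHom u f = 0 := by
  obtain ⟨w, rfl, rfl⟩ := exists_perm_apply_natAdd hab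
  rw [evalHom_of_mem_J hf u w hu, h0, map_zero]

lemma dsAddTwo_mem_J {f : R (n + 2 + 2)} (hf : f ∈ J (n + 2 + 2)) :
    dsAddTwo (n + 2) f ∈ J (n + 2) := by
  refine (mem_J_and_dsAddTwo_eq (h := dsAddTwo n (dsAddTwo (n + 2) f)) hf.1.dsAddTwo ?_).1
  simp only [evalHom_dsAddTwo]
  refine evalHom_congr_of_mem_J hf (a := Fin.castAdd 2 (Fin.natAdd n 0))
    (b := Fin.castAdd 2 (Fin.natAdd n 1)) (by simp [Fin.ext_iff]) (fun i ha hb => ?_) ?_ ?_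
  · induction i using Fin.addCases with
    | left i =>
      induction i using Fin.addCases with
      | left i => simp
      | right i => fin_cases i <;> contradiction
    | right i => simp
  all_goals
    simp only [Fin.append_left, Fin.append_right, Matrix.cons_val_zero, Matrix.cons_val_one,
      mul_inv_cancel, mul_one]

/-- `J n` as an additive subgroup of `R n`. -/
def JSubgroup (n : ℕ) : AddSubgroup (R n) where
  carrier := J n
  zero_mem' := ⟨fun w => map_zero _, fun _ => ⟨0, by rw [map_zero, map_zero]⟩⟩
  add_mem' := by
    rintro f g ⟨hf, hf'⟩ ⟨hg, hg'⟩
    refine ⟨fun w => by rw [map_add, hf, hg], fun h => ?_⟩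
    obtain ⟨⟨a, ha⟩, ⟨b, hb⟩⟩ := And.intro (hf' h) (hg' h)
    exact ⟨a + b, by rw [map_add, map_add, ha, hb]⟩
  neg_mem' := by
    rintro f ⟨hf, hf'⟩
    refine ⟨fun w => by rw [map_neg, hf], fun h => ?_⟩
    obtain ⟨a, ha⟩ := hf' h
    exact ⟨-a, by rw [map_neg, map_neg, ha]⟩

lemma ds_mem_J (hn : 2 ≤ n) {f : R n} (hf : f ∈ J n) : ds n f ∈ J (n - 2) := by
  obtain ⟨a, rfl⟩ := Nat.exists_eq_add_of_le' hn
  refine ⟨hf.1.dsAddTwo, fun ha => ?_⟩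
  obtain ⟨b, rfl⟩ := Nat.exists_eq_add_of_le' (show 2 ≤ a from ha)
  exact (dsAddTwo_mem_J hf).2 ha

end Supersymmetry

section Divisibility

lemma prod_pow_dvd_of_prime {ι M : Type*} [CommMonoidWithZero M] [IsCancelMulZero M]
    {s : Finset ι} {p : ι → M} {k : ℕ} {f : M} (hp : ∀ i ∈ s, Prime (p i))
    (hpp : (s : Set ι).Pairwise fun i j => ¬ p i ∣ p j) (hf : ∀ i ∈ s, p i ^ k ∣ f) :
    ∏ i ∈ s, p i ^ k ∣ f := by
  classical
  induction s using Finset.induction_on with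
  | empty => simp
  | insert a s ha ih =>
    rw [Finset.coe_insert, Set.pairwise_insert] at hpp
    rw [Finset.forall_mem_insert] at hp hf
    obtain ⟨q, rfl⟩ := ih hp.2 hpp.1 hf.2
    have h_not_dvd : ¬ p a ∣ ∏ i ∈ s, p i ^ k := fun h => by
      obtain ⟨i, hi, hai⟩ := (hp.1.dvd_finsetProd_iff _).mp h
      exact (hpp.2 i hi (ne_of_mem_of_not_mem hi ha).symm).1 (hp.1.dvd_of_dvd_pow hai)
    rw [Finset.prod_insert ha, mul_comm]
    exact mul_dvd_mul_left _ (hp.1.pow_dvd_of_dvd_mul_left k h_not_dvd hf.1)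

lemma prod_offDiag_eq_prod_lt {ι M : Type*} [LinearOrder ι] [CommMonoid M] (s : Finset ι)
    (F : ι × ι → M) :
    ∏ p ∈ s.offDiag, F p = ∏ p ∈ s.offDiag with p.1 < p.2, F p * F p.swap := by
  rw [← Finset.prod_filter_mul_prod_filter_not _ fun p => p.1 < p.2, Finset.prod_mul_distrib]
  congr 1
  refine Finset.prod_nbij' Prod.swap Prod.swap ?_ ?_ ?_ ?_ ?_ <;> simp <;> grind

variable {n : ℕ}

lemma X_injective : Function.Injective (X : Fin n → R n) := fun i j h => by
  have hij := congrFun ((AddMonoidAlgebra.single_left_inj one_ne_zero).mp h) i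
  by_contra hne
  simp [hne] at hij

lemma permHom_X (w : Equiv.Perm (Fin n)) (i : Fin n) : permHom w (X i) = X (w i) := by
  rw [← evalHom_unitX (permHom w (X i)), evalHom_permHom, evalHom_X, Function.comp_apply,
    coe_unitX]

lemma X_sub_X_dvd_iff {a b : Fin n} {f : R n} :
    X a - X b ∣ f ↔ evalHom (Function.update unitX a (unitX b)) f = 0 := by
  constructor
  · rintro ⟨g, rfl⟩
    by_cases hab : b = a <;> simp [hab]
  · intro h
    rw [← Ideal.mem_span_singleton, ← Ideal.Quotient.eq_zero_iff_mem, ← evalHom_unitX f,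
      ← map_evalHom_congr _ (fun i => ?_) f, h, map_zero]
    obtain rfl | hi := eq_or_ne i a
    · simpa [eq_comm] using Ideal.Quotient.eq.mpr (Ideal.mem_span_singleton_self (X i - X b))
    · simp [hi]

lemma prime_X_sub_X {a b : Fin n} (hab : a ≠ b) : Prime (X a - X b : R n) := by
  refine ⟨sub_ne_zero.mpr (X_injective.ne hab), fun h => ?_, fun f g h => ?_⟩
  · simpa using X_sub_X_dvd_iff.mp (h.dvd (a := 1))
  · simpa [X_sub_X_dvd_iff] using h

lemma not_X_sub_X_dvd_X_sub_X {a b c d : Fin n} (hab : a < b) (hcd : c < d)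
    (h : (a, b) ≠ (c, d)) : ¬ (X a - X b : R n) ∣ X c - X d := by
  simp only [X_sub_X_dvd_iff, map_sub, evalHom_X, sub_eq_zero, Function.update_apply,
    apply_ite (Units.val : (R n)ˣ → R n), coe_unitX, ← apply_ite X, X_injective.eq_iff]
  grind

lemma SymmP.sq_X_sub_X_dvd {f : R n} (hf : SymmP f) {a b : Fin n} (hab : a ≠ b)
    (h : X a - X b ∣ f) : (X a - X b) ^ 2 ∣ f := by
  obtain ⟨g, rfl⟩ := h
  have hg : permHom (Equiv.swap a b) g = -g := by
    have hswap := hf (Equiv.swap a b)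
    rw [map_mul, map_sub, permHom_X, permHom_X, Equiv.swap_apply_left, Equiv.swap_apply_right,
      ← neg_sub, neg_mul, ← mul_neg] at hswap
    exact neg_eq_iff_eq_neg.mp (mul_left_cancel₀ (prime_X_sub_X hab).ne_zero hswap)
  have hg0 : evalHom (Function.update unitX a (unitX b)) g = 0 := by
    have hu : Function.update unitX a (unitX b) ∘ Equiv.swap a b =
        Function.update unitX a (unitX b) := by
      funext i
      simp only [Function.comp_apply, Function.update_apply, Equiv.swap_apply_def]
      grind
    have _ : IsAddTorsionFree (R n) := .of_isTorsionFree ℤ _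
    refine self_eq_neg.mp ?_
    rw [← map_neg, ← hg, evalHom_permHom, hu]
  rw [sq]
  exact mul_dvd_mul_left _ (X_sub_X_dvd_iff.mpr hg0)

end Divisibility

section CrossProd

variable {ι κ S S' : Type*} [DecidableEq ι] [DecidableEq κ] [CommRing S] [CommRing S']

/-- The factor at the ordered pair `(i, j)` of the numerator of
`∏_{i ∈ I, j ∉ I} (1 - xᵢ xⱼ) / (xᵢ - xⱼ)`, all fractions being extended to the common denominator
`∏_{i ≠ j} (xᵢ - xⱼ)`. -/
def crossFactor (x : ι → S) (I : Finset ι) (p : ι × ι) : S :=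
  if p.1 ∈ I ∧ p.2 ∉ I then 1 - x p.1 * x p.2 else x p.1 - x p.2

/-- The numerator of `∏_{i ∈ I, j ∈ s \ I} (1 - xᵢ xⱼ) / (xᵢ - xⱼ)` over the denominator
`∏_{i ≠ j in s} (xᵢ - xⱼ)`, which is itself `crossProd x ∅ s`. -/
def crossProd (x : ι → S) (I s : Finset ι) : S := ∏ p ∈ s.offDiag, crossFactor x I p

lemma map_crossProd (φ : S →+* S') (x : ι → S) (I s : Finset ι) :
    φ (crossProd x I s) = crossProd (φ ∘ x) I s := by
  simp only [crossProd, crossFactor, map_prod, apply_ite φ, map_sub, map_mul, map_one,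
    Function.comp_apply]

lemma crossProd_map (x : κ → S) (σ : ι ↪ κ) (I s : Finset ι) :
    crossProd x (I.map σ) (s.map σ) = crossProd (x ∘ σ) I s := by
  have hoff : (s.map σ).offDiag = s.offDiag.map (σ.prodMap σ) := by
    ext p
    simp only [Finset.mem_offDiag, Finset.mem_map, Function.Embedding.coe_prodMap, Prod.exists,
      Prod.map_apply, Prod.ext_iff]
    grind [σ.injective]
  simp [crossProd, crossFactor, hoff]

lemma crossProd_self (x : ι → S) (s : Finset ι) : crossProd x s s = crossProd x ∅ s :=
  Finset.prod_congr rfl fun p hp => by simp [crossFactor, (Finset.mem_offDiag.mp hp).2.1]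

lemma crossProd_empty_ne_zero [IsDomain S] {x : ι → S} (hx : Function.Injective x)
    (s : Finset ι) : crossProd x ∅ s ≠ 0 :=
  Finset.prod_ne_zero_iff.mpr fun p hp => by
    simpa [crossFactor, sub_eq_zero] using hx.ne (Finset.mem_offDiag.mp hp).2.2

lemma sub_dvd_crossProd (x : ι → S) (I : Finset ι) {s : Finset ι} {a b : ι} (ha : a ∈ s)
    (hb : b ∈ s) (hab : a ≠ b) : x a - x b ∣ crossProd x I s := by
  by_cases h : a ∈ I ∧ b ∉ I
  · have hmem : (b, a) ∈ s.offDiag := Finset.mem_offDiag.mpr ⟨hb, ha, hab.symm⟩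
    rw [← neg_dvd, neg_sub]
    simpa [crossProd, crossFactor, h] using Finset.dvd_prod_of_mem (crossFactor x I) hmem
  · have hmem : (a, b) ∈ s.offDiag := Finset.mem_offDiag.mpr ⟨ha, hb, hab⟩
    simpa [crossProd, crossFactor, h] using Finset.dvd_prod_of_mem (crossFactor x I) hmem

lemma prod_offDiag_insert {M : Type*} [CommMonoid M] {a : ι} {s : Finset ι} (ha : a ∉ s)
    (F : ι × ι → M) :
    ∏ p ∈ (insert a s).offDiag, F p =
      (∏ p ∈ s.offDiag, F p) * ∏ j ∈ s, F (a, j) * F (j, a) := by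
  rw [Finset.offDiag_insert ha, Finset.prod_union, Finset.prod_union, Finset.prod_product,
    Finset.prod_product_right, Finset.prod_singleton, Finset.prod_singleton,
    Finset.prod_mul_distrib, mul_assoc]
  all_goals
    simp only [Finset.disjoint_left, Finset.mem_union, Finset.mem_offDiag, Finset.mem_product,
      Finset.mem_singleton]
    grind

/-- The product of the `xᵢ - xⱼ` over those ordered pairs of distinct `i, j ∈ s ∪ {a, b}` that are
not contained in `s`. -/
def pairFactor (x : ι → S) (a b : ι) (s : Finset ι) : S :=
  (x a - x b) * (x b - x a) *
    ∏ j ∈ s, (x a - x j) * (x j - x a) * ((x b - x j) * (x j - x b))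

variable {x : ι → S} {a b : ι} {s I : Finset ι}

lemma crossProd_eq_zero (hx : x a * x b = 1) (ha : a ∈ s) (hb : b ∈ s) (haI : a ∈ I)
    (hbI : b ∉ I) : crossProd x I s = 0 :=
  Finset.prod_eq_zero (i := (a, b))
    (Finset.mem_offDiag.mpr ⟨ha, hb, ne_of_mem_of_not_mem haI hbI⟩)
    (by simp [crossFactor, haI, hbI, hx])

-- The identity behind this is `(1 - x y) (1 - x y⁻¹) = (x - y) (x - y⁻¹)`.
lemma crossProd_insert_insert (hx : x a * x b = 1) (hab : a ≠ b) (ha : a ∉ s) (hb : b ∉ s)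
    (haI : a ∉ I) (hbI : b ∉ I) :
    crossProd x I (insert a (insert b s)) = crossProd x I s * pairFactor x a b s := by
  rw [crossProd, prod_offDiag_insert (by simp [hab, ha]), prod_offDiag_insert hb,
    Finset.prod_insert hb, crossProd, pairFactor, mul_assoc, mul_left_comm (∏ j ∈ s, _),
    ← Finset.prod_mul_distrib]
  congr 2
  · simp [crossFactor, haI, hbI]
  · refine Finset.prod_congr rfl fun j _ => ?_
    by_cases hj : j ∈ I <;> simp only [crossFactor, haI, hbI, hj, not_true_eq_false,
      not_false_eq_true, and_true, and_false, ↓reduceIte]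
    · linear_combination (x a - x j) * (x b - x j) * (x j ^ 2 - 1) * hx
    · ring

end CrossProd

section Symmetrization

variable {m : ℕ} {ι κ S S' : Type*} [CommRing S] [CommRing S']

/-- The value `g(u_I)` of `g` at the coordinates of `u` in `I`, in an arbitrary order (which does
not matter for symmetric `g`); it is `0` unless `I` has as many elements as `g` has variables. -/
def evalSubset (g : R m) (u : ι → Sˣ) (I : Finset ι) : S :=
  if h : I.card = m then evalHom (fun i => u ((I.equivFinOfCardEq h).symm i)) g else 0

lemma map_evalSubset (φ : S →+* S') (g : R m) (u : ι → Sˣ) (I : Finset ι) :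
    φ (evalSubset g u I) = evalSubset g (fun i => Units.map φ (u i)) I := by
  unfold evalSubset
  split_ifs
  · rw [map_evalHom]
  · rw [map_zero]

lemma SymmP.evalSubset_map_univ {g : R m} (hg : SymmP g) (u : ι → Sˣ) (e : Fin m ↪ ι) :
    evalSubset g u (Finset.univ.map e) = evalHom (u ∘ e) g := by
  have hcard : (Finset.univ.map e).card = m := by simp
  let w : Equiv.Perm (Fin m) := .ofBijective
    (fun i => (Finset.univ.map e).equivFinOfCardEq hcard ⟨e i, by simp⟩)
    (Finite.injective_iff_bijective.mp fun i j hij => by simpa using hij)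
  rw [evalSubset, dif_pos hcard, ← hg.evalHom_comp _ w]
  congr 2
  funext i
  simp [w]

lemma SymmP.evalSubset_map {g : R m} (hg : SymmP g) (u : κ → Sˣ) (σ : ι ↪ κ) (I : Finset ι) :
    evalSubset g u (I.map σ) = evalSubset g (u ∘ σ) I := by
  by_cases hI : I.card = m
  · let e : Fin m ↪ ι :=
      (I.equivFinOfCardEq hI).symm.toEmbedding.trans (Function.Embedding.subtype _)
    have he : Finset.univ.map e = I := by
      rw [← Finset.map_map, Finset.map_univ_equiv, Finset.univ_eq_attach]
      exact Finset.attach_map_val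
    rw [← he, Finset.map_map, hg.evalSubset_map_univ, hg.evalSubset_map_univ]
    rfl
  · simp [evalSubset, hI]

lemma evalSubset_eq_zero {l : ℕ} {g : R (l + 2)} (hg : g ∈ J (l + 2)) (h0 : dsAddTwo l g = 0)
    {u : ι → Sˣ} {I : Finset ι} {a b : ι} (ha : a ∈ I) (hb : b ∈ I) (hab : a ≠ b)
    (hu : u a * u b = 1) : evalSubset g u I = 0 := by
  unfold evalSubset
  split_ifs with hI
  · refine evalHom_eq_zero_of_dsAddTwo_eq_zero hg h0 (a := I.equivFinOfCardEq hI ⟨a, ha⟩)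
      (b := I.equivFinOfCardEq hI ⟨b, hb⟩) (by simpa using hab) (by simpa using hu)
  · rfl

variable [DecidableEq ι] [DecidableEq κ]

/-- The numerator of `∑_I g(u_I) ∏_{i ∈ I, j ∈ s \ I} (1 - uᵢ uⱼ) / (uᵢ - uⱼ)`, the sum being over
the `I ⊆ s` with as many elements as `g` has variables, over the denominator `crossProd u ∅ s`. -/
def symmNumerator (g : R m) (u : ι → Sˣ) (s : Finset ι) : S :=
  ∑ I ∈ s.powerset, evalSubset g u I * crossProd (Units.val ∘ u) I s

lemma map_symmNumerator (φ : S →+* S') (g : R m) (u : ι → Sˣ) (s : Finset ι) :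
    φ (symmNumerator g u s) = symmNumerator g (fun i => Units.map φ (u i)) s := by
  simp only [symmNumerator, map_sum, map_mul, map_evalSubset, map_crossProd]
  rfl

lemma SymmP.symmNumerator_map {g : R m} (hg : SymmP g) (u : κ → Sˣ) (σ : ι ↪ κ)
    (s : Finset ι) : symmNumerator g u (s.map σ) = symmNumerator g (u ∘ σ) s := by
  refine (Finset.sum_nbij (Finset.map σ) (fun I hI => ?_) (Finset.map_injective σ).injOn
    (fun I hI => ?_) fun I _ => ?_).symm
  · simpa using hI
  · obtain ⟨K, hK, rfl⟩ := Finset.subset_map_iff.mp (Finset.mem_powerset.mp hI)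
    exact ⟨K, Finset.mem_coe.mpr (Finset.mem_powerset.mpr hK), rfl⟩
  · rw [hg.evalSubset_map, crossProd_map]
    rfl

lemma symmNumerator_insert_insert {l : ℕ} {g : R (l + 2)} (hg : g ∈ J (l + 2))
    (h0 : dsAddTwo l g = 0) {u : ι → Sˣ} {a b : ι} {s : Finset ι} (hab : a ≠ b) (ha : a ∉ s)
    (hb : b ∉ s) (hu : u a * u b = 1) :
    symmNumerator g u (insert a (insert b s)) =
      symmNumerator g u s * pairFactor (Units.val ∘ u) a b s := by
  have hx : (u a : S) * u b = 1 := by simpa using congrArg Units.val hu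
  have hx' : (u b : S) * u a = 1 := mul_comm (u a : S) (u b) ▸ hx
  rw [symmNumerator, ← Finset.sum_subset (s₁ := s.powerset)]
  · rw [symmNumerator, Finset.sum_mul]
    refine Finset.sum_congr rfl fun I hI => ?_
    have hIs := Finset.mem_powerset.mp hI
    rw [crossProd_insert_insert (x := Units.val ∘ u) hx hab ha hb (fun h => ha (hIs h))
      (fun h => hb (hIs h)), mul_assoc]
  · exact Finset.powerset_mono.mpr (by grind)
  · intro I hI hIs
    by_cases haI : a ∈ I <;> by_cases hbI : b ∈ I
    · rw [evalSubset_eq_zero hg h0 haI hbI hab hu, zero_mul]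
    · rw [crossProd_eq_zero (x := Units.val ∘ u) hx (by simp) (by simp) haI hbI, mul_zero]
    · rw [crossProd_eq_zero (x := Units.val ∘ u) hx' (by simp) (by simp) hbI haI, mul_zero]
    · exact absurd (Finset.mem_powerset.mpr (by grind)) hIs

end Symmetrization

section Lifts

variable {m n : ℕ}

lemma evalHom_symmNumerator {S : Type*} [CommRing S] (g : R m) (u : Fin n → Sˣ) :
    evalHom u (symmNumerator g unitX Finset.univ) = symmNumerator g u Finset.univ := by
  rw [map_symmNumerator]
  congr 1
  exact funext fun i => Units.ext (evalHom_X u i)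

lemma evalHom_crossProd {S : Type*} [CommRing S] (u : Fin n → Sˣ) (I s : Finset (Fin n)) :
    evalHom u (crossProd X I s) = crossProd (Units.val ∘ u) I s := by
  rw [map_crossProd]
  exact congrArg (crossProd · I s) (funext (evalHom_X u))

lemma SymmP.symmP_symmNumerator {g : R m} (hg : SymmP g) :
    SymmP (symmNumerator g (unitX (n := n)) Finset.univ) :=
  symmP_of_evalHom_unitX_comp fun w => by
    rw [evalHom_symmNumerator, ← Equiv.coe_toEmbedding, ← hg.symmNumerator_map,
      Finset.map_univ_equiv]

lemma symmP_crossProd_empty : SymmP (crossProd (X (n := n)) ∅ Finset.univ) :=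
  symmP_of_evalHom_unitX_comp fun w => by
    rw [evalHom_crossProd]
    exact (crossProd_map X w.toEmbedding ∅ Finset.univ).symm.trans (by simp)

lemma SymmP.crossProd_empty_dvd {f : R n} (hf : SymmP f)
    (hdvd : ∀ a b : Fin n, a ≠ b → X a - X b ∣ f) : crossProd X ∅ Finset.univ ∣ f := by
  have hprod : crossProd (X (n := n)) ∅ Finset.univ =
      ∏ p ∈ Finset.univ.offDiag with p.1 < p.2, (-1 : R n) * (X p.1 - X p.2) ^ 2 := by
    rw [crossProd, prod_offDiag_eq_prod_lt]
    exact Finset.prod_congr rfl fun p _ => by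
      simp only [crossFactor, Finset.notMem_empty, false_and, ↓reduceIte, Prod.fst_swap,
        Prod.snd_swap]
      ring
  rw [hprod, Finset.prod_mul_distrib, Finset.prod_const,
    (isUnit_one.neg.pow _).mul_left_dvd]
  refine prod_pow_dvd_of_prime (fun p hp => ?_) (fun p hp q hq hpq => ?_) (fun p hp => ?_)
  · exact prime_X_sub_X (Finset.mem_filter.mp hp).2.ne
  · exact not_X_sub_X_dvd_X_sub_X (Finset.mem_filter.mp hp).2 (Finset.mem_filter.mp hq).2 hpq
  · have hne := (Finset.mem_filter.mp hp).2.ne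
    exact hf.sq_X_sub_X_dvd hne (hdvd _ _ hne)

lemma SymmP.crossProd_dvd_symmNumerator {g : R m} (hg : SymmP g) (n : ℕ) :
    crossProd X ∅ Finset.univ ∣ symmNumerator g (unitX (n := n)) Finset.univ :=
  hg.symmP_symmNumerator.crossProd_empty_dvd fun a b hab =>
    Finset.dvd_sum fun I _ =>
      (sub_dvd_crossProd X I (Finset.mem_univ a) (Finset.mem_univ b) hab).mul_left _

lemma SymmP.of_mul_left {f g : R n} (hf : SymmP f) (hf0 : f ≠ 0) (hfg : SymmP (f * g)) :
    SymmP g := fun w => by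
  have h := hfg w
  rw [map_mul, hf w] at h
  exact mul_left_cancel₀ hf0 h

lemma SymmP.symmNumerator_self {g : R m} (hg : SymmP g) :
    symmNumerator g unitX Finset.univ = crossProd X ∅ Finset.univ * g := by
  rw [symmNumerator, Finset.sum_eq_single_of_mem Finset.univ (by simp)]
  · rw [← crossProd_self, mul_comm]
    congr 1
    have huniv := hg.evalSubset_map_univ unitX (.refl (Fin m))
    rw [Finset.map_refl] at huniv
    exact huniv.trans (evalHom_unitX g)
  · intro I _ hI
    have hcard : I.card ≠ m := fun h => hI (Finset.card_eq_iff_eq_univ I |>.mp (by simpa using h))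
    rw [evalSubset, dif_neg hcard, zero_mul]

lemma univ_fin_add_two (n : ℕ) : (Finset.univ : Finset (Fin (n + 2))) =
    insert (Fin.natAdd n 0) (insert (Fin.natAdd n 1) (Finset.univ.map (Fin.castAddEmb 2))) := by
  ext i
  induction i using Fin.addCases with
  | left i => simp
  | right i => fin_cases i <;> simp

lemma append_genX_injective (n : ℕ) :
    Function.Injective (Fin.append genX ![genT n, (genT n)⁻¹]) := by
  let e : Fin (n + 2) → (Fin n → ℤ) × ℤ :=
    Fin.append (fun i => (Pi.single i 1, 0)) ![(0, 1), (0, -1)]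
  have hval : Fin.append genX ![genT n, (genT n)⁻¹] =
      fun i => monomialUnit (Multiplicative.ofAdd (e i)) := by
    funext i
    induction i using Fin.addCases with
    | left i => simp [e, genX]
    | right i => fin_cases i <;> simp [e, genT, ← map_inv, ← ofAdd_neg]
  have he : Function.Injective e := by
    refine Fin.append_injective_iff.mpr ⟨fun i j hij => ?_, ?_, fun i j => ?_⟩
    · by_contra hne
      simpa [hne] using congrFun (congrArg Prod.fst hij) i
    · simp [Function.Injective, Fin.forall_fin_two]
    · fin_cases j <;> simp
  intro i j hij
  simp only [hval, Units.ext_iff, coe_monomialUnit] at hij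
  exact he ((AddMonoidAlgebra.single_left_inj one_ne_zero).mp hij)

section AppendInv

variable {S : Type*} [CommRing S]

lemma natAdd_notMem_map_castAddEmb (j : Fin 2) :
    Fin.natAdd n j ∉ Finset.univ.map (Fin.castAddEmb 2) := by
  simp only [Finset.mem_map, Finset.mem_univ, true_and, not_exists, Fin.castAddEmb_apply,
    Fin.ext_iff, Fin.val_castAdd, Fin.val_natAdd]
  omega

/-- The quotient of the numerators (or of the denominators) in `n + 2` and in `n` variables at the
point `(u₁, …, uₙ, t, t⁻¹)`. -/
def appendInvFactor (u : Fin n → Sˣ) (t : Sˣ) : S :=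
  pairFactor (Units.val ∘ Fin.append u ![t, t⁻¹]) (Fin.natAdd n 0) (Fin.natAdd n 1)
    (Finset.univ.map (Fin.castAddEmb 2))

lemma append_comp_castAddEmb (u : Fin n → Sˣ) (t : Sˣ) :
    Fin.append u ![t, t⁻¹] ∘ Fin.castAddEmb 2 = u :=
  funext fun i => by simp

lemma crossProd_append_inv (u : Fin n → Sˣ) (t : Sˣ) :
    crossProd (Units.val ∘ Fin.append u ![t, t⁻¹]) ∅ Finset.univ =
      crossProd (Units.val ∘ u) ∅ Finset.univ * appendInvFactor u t := by
  rw [univ_fin_add_two, crossProd_insert_insert (by simp) (by simp [Fin.ext_iff])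
    (natAdd_notMem_map_castAddEmb 0) (natAdd_notMem_map_castAddEmb 1) (by simp) (by simp),
    ← Finset.map_empty (Fin.castAddEmb 2), crossProd_map, Function.comp_assoc,
    append_comp_castAddEmb]
  rfl

lemma symmNumerator_append_inv {l : ℕ} {g : R (l + 2)} (hg : g ∈ J (l + 2))
    (h0 : dsAddTwo l g = 0) (u : Fin n → Sˣ) (t : Sˣ) :
    symmNumerator g (Fin.append u ![t, t⁻¹]) Finset.univ =
      symmNumerator g u Finset.univ * appendInvFactor u t := by
  rw [univ_fin_add_two, symmNumerator_insert_insert hg h0 (by simp [Fin.ext_iff])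
    (natAdd_notMem_map_castAddEmb 0) (natAdd_notMem_map_castAddEmb 1) (by simp),
    hg.1.symmNumerator_map, append_comp_castAddEmb]
  rfl

end AppendInv

lemma evalHom_append_symmQuotient {l : ℕ} {g : R (l + 2)} (hg : g ∈ J (l + 2))
    (h0 : dsAddTwo l g = 0) {E : R n} {E' : R (n + 2)}
    (hE : symmNumerator g unitX Finset.univ = crossProd X ∅ Finset.univ * E)
    (hE' : symmNumerator g unitX Finset.univ = crossProd X ∅ Finset.univ * E') :
    evalHom (Fin.append genX ![genT n, (genT n)⁻¹]) E' = evalHom genX E := by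
  set v := Fin.append genX ![genT n, (genT n)⁻¹]
  refine mul_left_cancel₀ (crossProd_empty_ne_zero
    (Units.val_injective.comp (append_genX_injective n)) Finset.univ) ?_
  calc crossProd (Units.val ∘ v) ∅ Finset.univ * evalHom v E'
      = symmNumerator g v Finset.univ := by
        rw [← evalHom_symmNumerator, hE', map_mul, evalHom_crossProd]
    _ = symmNumerator g genX Finset.univ * appendInvFactor genX (genT n) :=
        symmNumerator_append_inv hg h0 genX (genT n)
    _ = crossProd (Units.val ∘ genX) ∅ Finset.univ * evalHom genX E *
          appendInvFactor genX (genT n) := by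
        rw [← evalHom_symmNumerator, hE, map_mul, evalHom_crossProd]
    _ = crossProd (Units.val ∘ v) ∅ Finset.univ * evalHom genX E := by
        rw [crossProd_append_inv, mul_right_comm]

lemma exists_compatible_lifts {g : R m} (hm : 2 ≤ m) (hg : g ∈ J m) (h0 : ds m g = 0) :
    ∃ E : (n : ℕ) → R n, E m = g ∧
      ∀ n, E (n + 2) ∈ J (n + 2) ∧ ds (n + 2) (E (n + 2)) = E n := by
  obtain ⟨l, rfl⟩ := Nat.exists_eq_add_of_le' hm
  choose E hE using hg.1.crossProd_dvd_symmNumerator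
  have hne (n : ℕ) : crossProd (X (n := n)) ∅ Finset.univ ≠ 0 :=
    crossProd_empty_ne_zero X_injective _
  refine ⟨E, mul_left_cancel₀ (hne _) ((hE _).symm.trans hg.1.symmNumerator_self), fun n => ?_⟩
  refine mem_J_and_dsAddTwo_eq (symmP_crossProd_empty.of_mul_left (hne _) ?_)
    (evalHom_append_symmQuotient hg h0 (hE n) (hE (n + 2)))
  exact hE (n + 2) ▸ hg.1.symmP_symmNumerator

lemma dsIter_mem_J {n : ℕ} {f : R n} (hf : f ∈ J n) {k : ℕ} (hk : 2 * k ≤ n) :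
    dsIter n k f ∈ J (n - 2 * k) := by
  induction k with
  | zero => exact hf
  | succ k ih =>
    have hnk : 2 ≤ n - 2 * k := by omega
    exact ds_mem_J hnk (ih (by omega))

lemma dsIter_apply_of_compatible {E : (n : ℕ) → R n} (hE : ∀ n, ds (n + 2) (E (n + 2)) = E n)
    {n k : ℕ} (hk : 2 * k ≤ n) : dsIter n k (E n) = E (n - 2 * k) := by
  have hE' (a : ℕ) (ha : 2 ≤ a) : ds a (E a) = E (a - 2) := by
    obtain ⟨b, rfl⟩ := Nat.exists_eq_add_of_le' ha
    exact hE b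
  induction k with
  | zero => rfl
  | succ k ih =>
    calc ds (n - 2 * k) (dsIter n k (E n)) = ds (n - 2 * k) (E (n - 2 * k)) := by
          rw [ih (by omega)]
      _ = E (n - 2 * (k + 1)) := hE' _ (by omega)

lemma exists_ds_eq_of_dsIter_eq_zero {n k : ℕ} (hk : 2 * k ≤ n) {f : R n} (hf : f ∈ J n)
    (h0 : dsIter n k f = 0) : ∃ F ∈ J (n + 2), ds (n + 2) F = f := by
  induction k generalizing f with
  | zero => exact ⟨0, (JSubgroup _).zero_mem, (map_zero _).trans h0.symm⟩
  | succ k ih =>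
    have hnk : 2 ≤ n - 2 * k := by omega
    obtain ⟨E, hE_self, hE⟩ := exists_compatible_lifts hnk (dsIter_mem_J hf (by omega)) h0
    have hEn : E n ∈ J n := by
      obtain ⟨b, rfl⟩ := Nat.exists_eq_add_of_le' (hnk.trans (Nat.sub_le n (2 * k)))
      exact (hE b).1
    have hsub : dsIter n k (f - E n) = 0 := by
      rw [map_sub, dsIter_apply_of_compatible (fun n => (hE n).2) (by omega), hE_self, sub_self]
    obtain ⟨F, hF, hdsF⟩ := ih (by omega) ((JSubgroup n).sub_mem hf hEn) hsub
    refine ⟨F + E (n + 2), (JSubgroup _).add_mem hF (hE n).1, ?_⟩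
    rw [map_add, (hE n).2, hdsF]
    exact sub_add_cancel f (E n)

end Lifts

section Iteration

lemma ds_heq {a b : ℕ} (h : a = b) {f : R a} {g : R b} (hfg : HEq f g) :
    HEq (ds a f) (ds b g) := by
  subst h
  rw [eq_of_heq hfg]

lemma dsIter_succ_heq {n k : ℕ} (hk : 2 * (k + 1) ≤ n) (f : R n) :
    HEq (dsIter n (k + 1) f) (dsIter (n - 2) k (ds n f)) := by
  induction k with
  | zero => rfl
  | succ k ih => exact ds_heq (by omega) (ih (by omega))

lemma dsIter_succ_eq_zero_iff {n k : ℕ} (hk : 2 * (k + 1) ≤ n) (f : R n) :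
    dsIter n (k + 1) f = 0 ↔ dsIter (n - 2) k (ds n f) = 0 := by
  have eq_zero_iff {a b : ℕ} (h : a = b) {f : R a} {g : R b} (hfg : HEq f g) :
      f = 0 ↔ g = 0 := by
    subst h
    rw [eq_of_heq hfg]
  exact eq_zero_iff (by omega) (dsIter_succ_heq hk f)

end Iteration

/-- For `k ≥ 1` and `n ≥ 2(k+1)`, the map `dsₙ` maps the
kernel of `dsₙ^{(k+1)}` (inside `Jₙ`) onto the kernel of `ds_{n-2}^{(k)}`
(inside `J_{n-2}`). -/
theorem ds_image_ker (n k : ℕ) (hk : 1 ≤ k) (hn : 2 * (k + 1) ≤ n) :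
    ds n '' {f : R n | f ∈ J n ∧ dsIter n (k + 1) f = 0} =
      {g : R (n - 2) | g ∈ J (n - 2) ∧ dsIter (n - 2) k g = 0} := by
  ext g
  constructor
  · rintro ⟨f, ⟨hf, h0⟩, rfl⟩
    exact ⟨ds_mem_J (by omega) hf, (dsIter_succ_eq_zero_iff hn f).mp h0⟩
  · rintro ⟨hg, h0⟩
    obtain ⟨a, rfl⟩ := Nat.exists_eq_add_of_le' (by omega : 2 ≤ n)
    obtain ⟨f, hf, rfl⟩ := exists_ds_eq_of_dsIter_eq_zero (by omega) hg h0
    exact ⟨f, ⟨hf, (dsIter_succ_eq_zero_iff hn f).mpr h0⟩, rfl⟩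

end
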